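/- Suppose H : ℝᵐ → ℝ is differentiable, μ-strongly convex with μ > 0, and has L-Lipschitz gradient; B : ℝⁿ → ℝᵐ is differentiable with each component Lipschitz with constant L̄_i and r := ΣL̄_i²; assumptions (A2) with constant τ > 0 and (A3) with constant ξ ≥ 0 hold; R : ℝⁿ → ℝ is convex; F := H∘B + R. Let y ∈ X and let x⁺ be a minimizer over X of x ↦ H(B(y)) + ∇(H∘B)(y)ᵀ(x − y) + (rL/2)‖x − y‖² + R(x). Then for every x ∈ X: F(x⁺) ≤ F(x) + rL⟨x⁺ − y, x − x⁺⟩ + ((rL + ξ)/2)‖x⁺ − y‖² − ((τμ − ξ)/2)‖x − y‖². -/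

import Mathlib

open scoped RealInnerProductSpace

/-!
Linearize `H ∘ B` at `y`. Integrating (A3) along segments issued from `y` shows that replacing
`B x - B y` by `B' y (x - y)` in `⟪∇H (B y), B x - B y⟫` costs at most `ξ / 2 * ‖x - y‖ ^ 2`. So the
descent lemma for `H` yields an upper quadratic model of `H ∘ B`, evaluated at `x⁺`, and strong
convexity of `H` together with (A2) a lower one, evaluated at `x`. The two linear terms differ by
`⟪∇(H ∘ B) y, x⁺ - x⟫`, which the first-order optimality condition of the subproblem controls.
-/

section NormedSpace

open Set AffineMap
open scoped Convex

variable {E F : Type*} [NormedAddCommGroup E] [NormedSpace ℝ E]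
  [NormedAddCommGroup F] [NormedSpace ℝ F]

theorem norm_image_sub_sub_hasFDerivWithinAt_le {f : E → F} {f' : E → E →L[ℝ] F} {x y : E} {C : ℝ}
    (hf : ∀ z ∈ [x -[ℝ] y], HasFDerivWithinAt f (f' z) [x -[ℝ] y] z)
    (bound : ∀ z ∈ [x -[ℝ] y], ‖(f' z - f' x) (z - x)‖ ≤ C * ‖z - x‖ ^ 2) :
    ‖f y - f x - f' x (y - x)‖ ≤ C / 2 * ‖y - x‖ ^ 2 := by
  have hseg : MapsTo (lineMap x y) (Icc (0 : ℝ) 1) [x -[ℝ] y] :=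
    fun t ht ↦ lineMap_mem_segment ℝ x y ht
  have hsub (t : ℝ) : lineMap x y t - x = t • (y - x) := by simp [lineMap_apply]
  have hderiv : ∀ t ∈ Icc (0 : ℝ) 1,
      HasDerivWithinAt (fun t ↦ f (lineMap x y t) - f x - t • f' x (y - x))
        ((f' (lineMap x y t) - f' x) (y - x)) (Icc 0 1) t := fun t ht ↦ by
    simpa using! (((hf _ (hseg ht)).comp_hasDerivWithinAt t hasDerivWithinAt_lineMap hseg).sub_const
      (f x)).sub ((hasDerivWithinAt_id t _).smul_const (f' x (y - x)))
  have hderiv_le : ∀ t ∈ Ico (0 : ℝ) 1,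
      ‖(f' (lineMap x y t) - f' x) (y - x)‖ ≤ C * ‖y - x‖ ^ 2 * t := fun t ht ↦ by
    rcases ht.1.eq_or_lt with rfl | ht0
    · simp
    · have h := bound _ (hseg (Ico_subset_Icc_self ht))
      rw [hsub, map_smul, norm_smul, norm_smul, Real.norm_of_nonneg ht.1] at h
      exact le_of_mul_le_mul_left (h.trans_eq (by ring)) ht0
  have hquad (t : ℝ) :
      HasDerivAt (fun t ↦ C * ‖y - x‖ ^ 2 * (t ^ 2 / 2)) (C * ‖y - x‖ ^ 2 * t) t := by
    simpa using ((hasDerivAt_pow 2 t).div_const 2).const_mul (C * ‖y - x‖ ^ 2)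
  have h := image_norm_le_of_norm_deriv_right_le_deriv_boundary
    (fun t ht ↦ (hderiv t ht).continuousWithinAt)
    (fun t ht ↦ (hderiv t (Ico_subset_Icc_self ht)).mono_of_mem_nhdsWithin
      (Icc_mem_nhdsGE_of_mem ht))
    (by simp) hquad hderiv_le (right_mem_Icc.2 zero_le_one)
  simp only [lineMap_apply_one, one_smul] at h
  linarith

theorem hasFDerivWithinAt_add_sub_nonneg_of_isMinOn {φ R : E → ℝ} {φ' : E →L[ℝ] ℝ} {X : Set E}
    {p x : E} (hmin : IsMinOn (fun w ↦ φ w + R w) X p) (hφ : HasFDerivWithinAt φ φ' X p)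
    (hR : ConvexOn ℝ X R) (hp : p ∈ X) (hx : x ∈ X) :
    0 ≤ φ' (x - p) + (R x - R p) := by
  have hline : MapsTo (lineMap p x) (Icc (0 : ℝ) 1) X := fun t ht ↦ hR.1.lineMap_mem hp hx ht
  -- Replacing `R` by its chord majorant keeps the minimum at `t = 0` and makes it differentiable.
  have hmin_chord : IsMinOn (fun t : ℝ ↦ φ (lineMap p x t) + t * (R x - R p)) (Icc 0 1) 0 := by
    refine isMinOn_iff.2 fun t ht ↦ ?_
    have hle := isMinOn_iff.1 hmin _ (hline ht)
    have hchord := hR.2 hp hx (sub_nonneg.2 ht.2) ht.1 (sub_add_cancel 1 t)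
    rw [← lineMap_apply_module, smul_eq_mul, smul_eq_mul] at hchord
    simp only [lineMap_apply_zero]
    linarith
  have hderiv : HasDerivWithinAt (fun t : ℝ ↦ φ (lineMap p x t) + t * (R x - R p))
      (φ' (x - p) + 1 * (R x - R p)) (Icc 0 1) 0 := by
    refine HasDerivWithinAt.add ?_ ((hasDerivWithinAt_id 0 _).mul_const _)
    exact HasFDerivWithinAt.comp_hasDerivWithinAt (t := X) 0 (by simpa using hφ)
      hasDerivWithinAt_lineMap hline
  have hcone : (1 : ℝ) ∈ posTangentConeAt (Icc 0 1) (0 : ℝ) :=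
    mem_posTangentConeAt_of_segment_subset (by simp [segment_eq_Icc])
  simpa using hmin_chord.localize.hasFDerivWithinAt_nonneg hderiv.hasFDerivWithinAt hcone

end NormedSpace

theorem norm_sq_le_sum_sq_mul_sq {ι : Type*} [Fintype ι] {V : ι → Type*}
    [∀ i, SeminormedAddCommGroup (V i)] {v : PiLp 2 V} {c : ι → ℝ} {a : ℝ}
    (h : ∀ i, ‖v i‖ ≤ c i * a) : ‖v‖ ^ 2 ≤ (∑ i, c i ^ 2) * a ^ 2 := by
  rw [PiLp.norm_sq_eq_of_L2, Finset.sum_mul]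
  gcongr with i
  rw [← mul_pow]
  gcongr
  exact h i

section InnerProductSpace

open scoped NNReal

variable {E G : Type*} [NormedAddCommGroup E] [InnerProductSpace ℝ E]
  [NormedAddCommGroup G] [InnerProductSpace ℝ G]

theorem inner_add_inner_add_sub_nonneg_of_isMinOn {X : Set E} {R : E → ℝ} {g y p x : E} {a c : ℝ}
    (hmin : IsMinOn (fun w ↦ a + ⟪g, w - y⟫ + c / 2 * ‖w - y‖ ^ 2 + R w) X p)
    (hR : ConvexOn ℝ X R) (hp : p ∈ X) (hx : x ∈ X) :
    0 ≤ ⟪g, x - p⟫ + c * ⟪p - y, x - p⟫ + (R x - R p) := by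
  have hsub : HasFDerivAt (fun w ↦ w - y) (.id ℝ E) p := (hasFDerivAt_id p).sub_const y
  have hmodel : HasFDerivAt (fun w ↦ a + ⟪g, w - y⟫ + c / 2 * ‖w - y‖ ^ 2)
      (innerSL ℝ g + c • innerSL ℝ (p - y)) p := by
    refine ((((innerSL ℝ g).hasFDerivAt.comp p hsub).const_add a).add
      (hsub.norm_sq.const_mul (c / 2))).congr_fderiv ?_
    rw [ContinuousLinearMap.comp_id, ContinuousLinearMap.comp_id]
    module
  simpa only [add_apply, smul_apply, innerSL_apply_apply, smul_eq_mul] using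
    hasFDerivWithinAt_add_sub_nonneg_of_isMinOn hmin hmodel.hasFDerivWithinAt hR hp hx

theorem abs_inner_image_sub_sub_fderiv_le {X : Set E} {B : E → G} {g : G} {x y : E} {ξ : ℝ}
    (hX : StarConvex ℝ y X) (hx : x ∈ X) (hB : ∀ z ∈ X, DifferentiableAt ℝ B z)
    (hcurv : ∀ z ∈ X, |⟪g, (fderiv ℝ B z - fderiv ℝ B y) (z - y)⟫| ≤ ξ * ‖z - y‖ ^ 2) :
    |⟪g, B x - B y - fderiv ℝ B y (x - y)⟫| ≤ ξ / 2 * ‖x - y‖ ^ 2 := by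
  have hseg := hX.segment_subset hx
  simpa [inner_sub_right] using norm_image_sub_sub_hasFDerivWithinAt_le
    (f := fun z ↦ ⟪g, B z⟫) (f' := fun z ↦ (innerSL ℝ g).comp (fderiv ℝ B z))
    (fun z hz ↦ ((innerSL ℝ g).hasFDerivAt.comp z
      (hB z (hseg hz)).hasFDerivAt).hasFDerivWithinAt)
    (fun z hz ↦ by simpa [inner_sub_right] using hcurv z (hseg hz))

variable [CompleteSpace G]

theorem le_add_inner_gradient_add_norm_sq {H : G → ℝ} {L : ℝ≥0} (hH : Differentiable ℝ H)
    (hL : LipschitzWith L (gradient H)) (u v : G) :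
    H v ≤ H u + ⟪gradient H u, v - u⟫ + L / 2 * ‖v - u‖ ^ 2 := by
  have hbound (z : G) : |⟪gradient H z - gradient H u, z - u⟫| ≤ L * ‖z - u‖ ^ 2 :=
    calc |⟪gradient H z - gradient H u, z - u⟫|
        ≤ ‖gradient H z - gradient H u‖ * ‖z - u‖ := abs_real_inner_le_norm _ _
      _ ≤ L * ‖z - u‖ * ‖z - u‖ := by gcongr; exact hL.norm_sub_le z u
      _ = L * ‖z - u‖ ^ 2 := by ring
  have h := norm_image_sub_sub_hasFDerivWithinAt_le (f := H) (x := u) (y := v)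
    (fun z _ ↦ (hH z).hasFDerivAt.hasFDerivWithinAt)
    (fun z _ ↦ by simpa [← inner_gradient_left, ← inner_sub_left] using hbound z)
  rw [← inner_gradient_left] at h
  linarith [le_of_abs_le h]

variable [CompleteSpace E] {X : Set E} {H : G → ℝ} {B : E → G} {x y : E} {ξ : ℝ}

theorem inner_gradient_comp (hH : DifferentiableAt ℝ H (B y)) (hB : DifferentiableAt ℝ B y)
    (d : E) : ⟪gradient (fun v ↦ H (B v)) y, d⟫ = ⟪gradient H (B y), fderiv ℝ B y d⟫ := by
  rw [inner_gradient_left, inner_gradient_left, fderiv_fun_comp y hH hB,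
    ContinuousLinearMap.comp_apply]

theorem abs_inner_image_sub_sub_inner_gradient_comp_le
    (hH : DifferentiableAt ℝ H (B y)) (hX : StarConvex ℝ y X) (hy : y ∈ X) (hx : x ∈ X)
    (hB : ∀ z ∈ X, DifferentiableAt ℝ B z)
    (hcurv : ∀ z ∈ X,
      |⟪gradient H (B y), (fderiv ℝ B z - fderiv ℝ B y) (z - y)⟫| ≤ ξ * ‖z - y‖ ^ 2) :
    |⟪gradient H (B y), B x - B y⟫ - ⟪gradient (fun v ↦ H (B v)) y, x - y⟫|
      ≤ ξ / 2 * ‖x - y‖ ^ 2 := by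
  rw [inner_gradient_comp hH (hB y hy), ← inner_sub_right]
  exact abs_inner_image_sub_sub_fderiv_le hX hx hB hcurv

theorem cfista_subproblem_objective_bound_general {R : E → ℝ} {μ r τ : ℝ} {L : ℝ≥0} {p : E}
    (hH : Differentiable ℝ H) (hμ : 0 ≤ μ)
    (hHsc : ∀ v, H (B y) + ⟪gradient H (B y), v - B y⟫ + μ / 2 * ‖v - B y‖ ^ 2 ≤ H v)
    (hHlip : LipschitzWith L (gradient H))
    (hB : ∀ z ∈ X, DifferentiableAt ℝ B z)
    (hBr : ∀ z ∈ X, ‖B z - B y‖ ^ 2 ≤ r * ‖z - y‖ ^ 2)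
    (hBτ : ∀ z ∈ X, τ * ‖z - y‖ ^ 2 ≤ ‖B z - B y‖ ^ 2)
    (hcurv : ∀ z ∈ X,
      |⟪gradient H (B y), (fderiv ℝ B z - fderiv ℝ B y) (z - y)⟫| ≤ ξ * ‖z - y‖ ^ 2)
    (hR : ConvexOn ℝ X R) (hy : y ∈ X) (hp : p ∈ X)
    (hmin : IsMinOn (fun w ↦ H (B y) + ⟪gradient (fun v ↦ H (B v)) y, w - y⟫
      + r * L / 2 * ‖w - y‖ ^ 2 + R w) X p) (hx : x ∈ X) :
    H (B p) + R p ≤ H (B x) + R x + r * L * ⟪p - y, x - p⟫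
      + (r * L + ξ) / 2 * ‖p - y‖ ^ 2 - (τ * μ - ξ) / 2 * ‖x - y‖ ^ 2 := by
  have hlin : ∀ z ∈ X, |⟪gradient H (B y), B z - B y⟫
      - ⟪gradient (fun v ↦ H (B v)) y, z - y⟫| ≤ ξ / 2 * ‖z - y‖ ^ 2 := fun z hz ↦
    abs_inner_image_sub_sub_inner_gradient_comp_le (hH (B y)) (hR.1.starConvex hy) hy hz hB hcurv
  have hupper : H (B p) ≤ H (B y) + ⟪gradient (fun v ↦ H (B v)) y, p - y⟫
      + (r * L + ξ) / 2 * ‖p - y‖ ^ 2 := by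
    have hr : L / 2 * ‖B p - B y‖ ^ 2 ≤ L / 2 * (r * ‖p - y‖ ^ 2) := by gcongr; exact hBr p hp
    linarith [le_add_inner_gradient_add_norm_sq hH hHlip (B y) (B p), (abs_le.1 (hlin p hp)).2]
  have hlower : H (B y) + ⟪gradient (fun v ↦ H (B v)) y, x - y⟫
      + (τ * μ - ξ) / 2 * ‖x - y‖ ^ 2 ≤ H (B x) := by
    have hτ : μ / 2 * (τ * ‖x - y‖ ^ 2) ≤ μ / 2 * ‖B x - B y‖ ^ 2 := by gcongr; exact hBτ x hx
    linarith [hHsc (B x), (abs_le.1 (hlin x hx)).1]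
  have hopt := inner_add_inner_add_sub_nonneg_of_isMinOn hmin hR hp hx
  have hsplit : ⟪gradient (fun v ↦ H (B v)) y, x - p⟫
      = ⟪gradient (fun v ↦ H (B v)) y, x - y⟫ - ⟪gradient (fun v ↦ H (B v)) y, p - y⟫ := by
    rw [← inner_sub_right, sub_sub_sub_cancel_right]
  linarith

end InnerProductSpace

/-- Inequality (2.8) in the proof of Theorem 2.1: if `x⁺` minimizes the C-FISTA
proximal subproblem at `y ∈ X`, then for every `x ∈ X`,
`F(x⁺) ≤ F(x) + rL⟨x⁺ - y, x - x⁺⟩ + ((rL + ξ)/2)‖x⁺ - y‖² - ((τμ - ξ)/2)‖x - y‖²`. -/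
theorem cfista_subproblem_objective_bound
    {n m : ℕ}
    (X : Set (EuclideanSpace ℝ (Fin n)))
    (hXclosed : IsClosed X) (hXconvex : Convex ℝ X)
    (H : EuclideanSpace ℝ (Fin m) → ℝ)
    (hHdiff : Differentiable ℝ H)
    (μ L : ℝ) (hμ : 0 < μ) (hL : 0 < L)
    (hHsc : ∀ u v, H v ≥ H u + ⟪gradient H u, v - u⟫ + μ / 2 * ‖v - u‖ ^ 2)
    (hHlip : ∀ u v, ‖gradient H u - gradient H v‖ ≤ L * ‖u - v‖)
    (B : EuclideanSpace ℝ (Fin n) → EuclideanSpace ℝ (Fin m))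
    (hB : Differentiable ℝ B)
    (Lbar : Fin m → ℝ) (hLbar : ∀ i, 0 ≤ Lbar i)
    (hA1lip : ∀ i, ∀ x y, |B x i - B y i| ≤ Lbar i * ‖x - y‖)
    (r : ℝ) (hr : r = ∑ i, Lbar i ^ 2)
    (τ : ℝ) (hτ : 0 < τ)
    (hA2 : ∀ x ∈ Submodule.span ℝ X, ∀ y ∈ Submodule.span ℝ X,
      τ * ‖x - y‖ ^ 2 ≤ ‖B x - B y‖ ^ 2)
    (ξ : ℝ) (hξ : 0 ≤ ξ)
    (hA3 : ∀ x' ∈ Submodule.span ℝ X, ∀ x'' ∈ Submodule.span ℝ X,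
      |⟪gradient H (B x'), (fderiv ℝ B x'' - fderiv ℝ B x') (x'' - x')⟫|
        ≤ ξ * ‖x'' - x'‖ ^ 2)
    (R : EuclideanSpace ℝ (Fin n) → ℝ) (hR : ConvexOn ℝ Set.univ R)
    (F : EuclideanSpace ℝ (Fin n) → ℝ) (hF : ∀ x, F x = H (B x) + R x)
    (y : EuclideanSpace ℝ (Fin n)) (hy : y ∈ X)
    (xplus : EuclideanSpace ℝ (Fin n)) (hxplusX : xplus ∈ X)
    (hxplus : ∀ w ∈ X,
      H (B y) + ⟪gradient (fun v => H (B v)) y, xplus - y⟫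
          + r * L / 2 * ‖xplus - y‖ ^ 2 + R xplus
        ≤ H (B y) + ⟪gradient (fun v => H (B v)) y, w - y⟫
          + r * L / 2 * ‖w - y‖ ^ 2 + R w) :
    ∀ x ∈ X,
      F xplus ≤ F x + r * L * ⟪xplus - y, x - xplus⟫
        + (r * L + ξ) / 2 * ‖xplus - y‖ ^ 2 - (τ * μ - ξ) / 2 * ‖x - y‖ ^ 2 := by
  intro x hx
  have hspan {z} (hz : z ∈ X) : z ∈ Submodule.span ℝ X := Submodule.subset_span hz
  have hHlip' : LipschitzWith ⟨L, hL.le⟩ (gradient H) :=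
    .of_dist_le_mul fun u v ↦ by simpa only [dist_eq_norm] using! hHlip u v
  have hBr : ∀ z ∈ X, ‖B z - B y‖ ^ 2 ≤ r * ‖z - y‖ ^ 2 := fun z _ ↦
    hr ▸ norm_sq_le_sum_sq_mul_sq fun i ↦ hA1lip i z y
  rw [hF, hF]
  exact cfista_subproblem_objective_bound_general hHdiff hμ.le (hHsc (B y)) hHlip' (fun z _ ↦ hB z)
    hBr (fun z hz ↦ hA2 z (hspan hz) y (hspan hy)) (fun z hz ↦ hA3 y (hspan hy) z (hspan hz))
    (hR.subset (Set.subset_univ X) hXconvex) hy hxplusX hxplus hx
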